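/- Let Ξ be a measurable space, X a nonempty set, and f : X × Ξ → ℝ. Let 𝒫₁ and 𝒫₂ be nonempty sets of probability measures on Ξ such that f(x,·) is integrable with respect to every Q ∈ 𝒫₁ ∪ 𝒫₂ for every x ∈ X, and suppose there is C ≥ 0 with |∫ f(x,·) dQ| ≤ C for all x ∈ X and all Q ∈ 𝒫₁ ∪ 𝒫₂. Define the distributionally robust optimal values v_i := inf_{x∈X} sup_{Q∈𝒫_i} ∫ f(x,·) dQ for i = 1, 2. Then |v₁ − v₂| ≤ ℍ(𝒫₁,𝒫₂). -/

import Mathlib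

open MeasureTheory

/-- The pseudometric `𝕕(P₁,P₂) = sup_{x ∈ X} |∫ f(x,·) dP₁ − ∫ f(x,·) dP₂|`. -/
noncomputable def pseudoDist {Ξ X : Type*} [MeasurableSpace Ξ] (f : X → Ξ → ℝ)
    (P₁ P₂ : Measure Ξ) : ℝ :=
  ⨆ x : X, |(∫ ξ, f x ξ ∂P₁) - ∫ ξ, f x ξ ∂P₂|

/-- The Hausdorff distance `ℍ(𝒫₁,𝒫₂)` between two sets of measures under `pseudoDist`. -/
noncomputable def hausdorffDistSets {Ξ X : Type*} [MeasurableSpace Ξ] (f : X → Ξ → ℝ)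
    (𝒜₁ 𝒜₂ : Set (Measure Ξ)) : ℝ :=
  max (⨆ Q : 𝒜₁, ⨅ P : 𝒜₂, pseudoDist f (Q : Measure Ξ) (P : Measure Ξ))
      (⨆ Q : 𝒜₂, ⨅ P : 𝒜₁, pseudoDist f (Q : Measure Ξ) (P : Measure Ξ))

/-!
If `u a - w b ≤ d a b` for all `a` and `b`, then `⨆ a, u a` exceeds `⨆ b, w b` by at most
`⨆ a, ⨅ b, d a b`: match each `a` with a nearly closest `b`. For `u = g x` and `w = h x` the choice
`d a b := ⨆ x, |g x a - h x b|` makes this bound independent of `x`, so it survives the outer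
infimum over `x`.
-/

section OrderedGroup

open Set

variable {α ι κ κ' : Type*} [ConditionallyCompleteLattice α] [AddCommGroup α] [IsOrderedAddMonoid α]

theorem ciInf_sub_ciInf_le [Nonempty ι] {u w : ι → α} {c : α} (hu : BddBelow (range u))
    (huw : ∀ i, u i - w i ≤ c) : (⨅ i, u i) - ⨅ i, w i ≤ c :=
  sub_le_comm.1 <| le_ciInf fun i =>
    (sub_le_sub_right (ciInf_le hu i) c).trans (sub_le_comm.1 (huw i))

theorem ciSup_sub_ciSup_le_ciSup_ciInf [Nonempty κ] [Nonempty κ'] {u : κ → α} {w : κ' → α}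
    {d : κ → κ' → α} (hw : BddAbove (range w)) (hd : BddAbove (range fun a => ⨅ b, d a b))
    (huw : ∀ a b, u a - w b ≤ d a b) : (⨆ a, u a) - ⨆ b, w b ≤ ⨆ a, ⨅ b, d a b := by
  refine sub_le_iff_le_add.2 (ciSup_le fun a => sub_le_iff_le_add.1 ?_)
  calc u a - ⨆ b, w b
      ≤ ⨅ b, d a b := le_ciInf fun b => (sub_le_sub_left (le_ciSup hw b) _).trans (huw a b)
    _ ≤ ⨆ a, ⨅ b, d a b := le_ciSup hd a

theorem bddAbove_range_of_abs_sub_le [Nonempty κ'] {u : κ → α} {w : κ' → α} {D : α}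
    (huw : ∀ a b, |u a - w b| ≤ D) : BddAbove (range u) := by
  obtain ⟨b⟩ := ‹Nonempty κ'›
  exact ⟨D + w b, forall_mem_range.2 fun a =>
    sub_le_iff_le_add.1 ((le_abs_self _).trans (huw a b))⟩

variable [Nonempty ι] [Nonempty κ'] {g : ι → κ → α} {h : ι → κ' → α} {m D : α}

theorem bddAbove_range_ciInf_ciSup_abs_sub (hD : ∀ x a b, |g x a - h x b| ≤ D) :
    BddAbove (range fun a => ⨅ b, ⨆ x, |g x a - h x b|) := by
  obtain ⟨x₀⟩ := ‹Nonempty ι›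
  obtain ⟨b₀⟩ := ‹Nonempty κ'›
  have bddBelow_dist (a : κ) : BddBelow (range fun b => ⨆ x, |g x a - h x b|) :=
    ⟨0, forall_mem_range.2 fun b =>
      (abs_nonneg _).trans (le_ciSup ⟨D, forall_mem_range.2 fun x => hD x a b⟩ x₀)⟩
  exact ⟨D, forall_mem_range.2 fun a =>
    (ciInf_le (bddBelow_dist a) b₀).trans (ciSup_le fun x => hD x a b₀)⟩

theorem ciInf_ciSup_sub_ciInf_ciSup_le [Nonempty κ] (hm : ∀ x a, m ≤ g x a)
    (hD : ∀ x a b, |g x a - h x b| ≤ D) :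
    (⨅ x, ⨆ a, g x a) - ⨅ x, ⨆ b, h x b ≤ ⨆ a, ⨅ b, ⨆ x, |g x a - h x b| := by
  have hg (x : ι) : BddAbove (range (g x)) := bddAbove_range_of_abs_sub_le (hD x)
  have hh (x : ι) : BddAbove (range (h x)) :=
    bddAbove_range_of_abs_sub_le fun b a => (abs_sub_comm _ _).trans_le (hD x a b)
  have bddBelow_ciSup : BddBelow (range fun x => ⨆ a, g x a) := by
    obtain ⟨a₀⟩ := ‹Nonempty κ›
    exact ⟨m, forall_mem_range.2 fun x => (hm x a₀).trans (le_ciSup (hg x) a₀)⟩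
  refine ciInf_sub_ciInf_le bddBelow_ciSup fun x =>
    ciSup_sub_ciSup_le_ciSup_ciInf (hh x) (bddAbove_range_ciInf_ciSup_abs_sub hD) fun a b => ?_
  calc g x a - h x b
      ≤ |g x a - h x b| := le_abs_self _
    _ ≤ ⨆ x, |g x a - h x b| := le_ciSup ⟨D, forall_mem_range.2 fun x => hD x a b⟩ x

theorem dro_optimal_value_diff_le_hausdorff_general [Nonempty κ]
    (hm : ∀ x a, m ≤ g x a) (hD : ∀ x a b, |g x a - h x b| ≤ D) :
    |(⨅ x, ⨆ a, g x a) - ⨅ x, ⨆ b, h x b| ≤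
      (⨆ a, ⨅ b, ⨆ x, |g x a - h x b|) ⊔ ⨆ b, ⨅ a, ⨆ x, |h x b - g x a| := by
  have hm' (x : ι) (b : κ') : m - D ≤ h x b := by
    obtain ⟨a⟩ := ‹Nonempty κ›
    exact (sub_le_sub_right (hm x a) D).trans
      (sub_le_comm.1 ((le_abs_self _).trans (hD x a b)))
  have hD' (x : ι) (b : κ') (a : κ) : |h x b - g x a| ≤ D :=
    (abs_sub_comm _ _).trans_le (hD x a b)
  rw [abs_le', neg_sub]
  exact ⟨(ciInf_ciSup_sub_ciInf_ciSup_le hm hD).trans le_sup_left,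
    (ciInf_ciSup_sub_ciInf_ciSup_le hm' hD').trans le_sup_right⟩

end OrderedGroup

/-- The difference between two DRO optimal values is bounded by the Hausdorff distance
between the corresponding ambiguity sets. -/
theorem dro_optimal_value_diff_le_hausdorff
    {Ξ X : Type*} [MeasurableSpace Ξ] [Nonempty X]
    (f : X → Ξ → ℝ)
    (𝒜₁ 𝒜₂ : Set (Measure Ξ)) (h₁ : 𝒜₁.Nonempty) (h₂ : 𝒜₂.Nonempty)
    (hprob : ∀ Q ∈ 𝒜₁ ∪ 𝒜₂, IsProbabilityMeasure Q)
    (hint : ∀ x : X, ∀ Q ∈ 𝒜₁ ∪ 𝒜₂, Integrable (f x) Q)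
    (C : ℝ) (hC : 0 ≤ C)
    (hb : ∀ x : X, ∀ Q ∈ 𝒜₁ ∪ 𝒜₂, |∫ ξ, f x ξ ∂Q| ≤ C)
    (v₁ v₂ : ℝ)
    (hv₁ : v₁ = ⨅ x : X, ⨆ Q : 𝒜₁, ∫ ξ, f x ξ ∂(Q : Measure Ξ))
    (hv₂ : v₂ = ⨅ x : X, ⨆ Q : 𝒜₂, ∫ ξ, f x ξ ∂(Q : Measure Ξ)) :
    |v₁ - v₂| ≤ hausdorffDistSets f 𝒜₁ 𝒜₂ := by
  have := h₁.to_subtype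
  have := h₂.to_subtype
  subst hv₁ hv₂
  unfold hausdorffDistSets pseudoDist
  exact dro_optimal_value_diff_le_hausdorff_general (m := -C) (D := C + C)
    (fun x Q => (abs_le.1 (hb x Q (.inl Q.2))).1)
    fun x Q P => (abs_sub _ _).trans (add_le_add (hb x Q (.inl Q.2)) (hb x P (.inr P.2)))
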